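/- Let SU(2) be the group of 2×2 complex special unitary matrices, and define d(g,h) = arccos(Re(tr(g h⁻¹))/2) for g,h ∈ SU(2) (the distance induced by the bi-invariant Riemannian metric, equal to the geodesic distance on the unit sphere S³ under the standard identification). Then d is a restricted negative definite kernel on SU(2): for every n, all g₁,…,gₙ ∈ SU(2) and all ξ₁,…,ξₙ ∈ ℂ with ∑ᵢ ξᵢ = 0, the real part of ∑_{i,j} d(gᵢ,gⱼ) ξᵢ conj(ξⱼ) is ≤ 0. Equivalently, the Brownian kernel K(g,h) = (1/2)(d(g,e) + d(h,e) − d(g,h)) is positive definite on SU(2). -/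

import Mathlib

/-- `SU(2)` as found in Mathlib is only a submonoid of the matrices; we endow it with its
natural group structure (the inverse being the conjugate transpose). -/
noncomputable instance : Group (Matrix.specialUnitaryGroup (Fin 2) ℂ) :=
  { (inferInstance : Monoid (Matrix.specialUnitaryGroup (Fin 2) ℂ)) with
    inv := fun g => ⟨star g.1, by
      rw [Matrix.mem_specialUnitaryGroup_iff]
      refine ⟨Unitary.star_mem g.2.1, ?_⟩
      have hdet : (g.1).det = 1 := g.2.2
      simp [Matrix.star_eq_conjTranspose, Matrix.det_conjTranspose, hdet]⟩
    inv_mul_cancel := fun g => by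
      apply Subtype.ext
      exact (Unitary.mem_iff.mp g.2.1).1 }

/-- `SU(2)` is a topological group. -/
instance : IsTopologicalGroup (Matrix.specialUnitaryGroup (Fin 2) ℂ) where
  continuous_mul := by
    apply Continuous.subtype_mk
    exact (continuous_mul.comp ((continuous_subtype_val.comp continuous_fst).prodMk
      (continuous_subtype_val.comp continuous_snd)))
  continuous_inv := by
    apply Continuous.subtype_mk
    exact continuous_star.comp continuous_subtype_val

/-- The bi-invariant Riemannian distance on `SU(2)`: `d(g,h) = arccos(Re(tr(g h⁻¹))/2)`. -/
noncomputable def dSU2 (g h : Matrix.specialUnitaryGroup (Fin 2) ℂ) : ℝ :=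
  Real.arccos ((Matrix.trace ((g * h⁻¹ : Matrix.specialUnitaryGroup (Fin 2) ℂ) :
    Matrix (Fin 2) (Fin 2) ℂ)).re / 2)

namespace SU2Aux

lemma coeff_nonneg (n : ℕ) : 0 ≤ Ring.choose ((1/2 : ℝ) + n - 1) n := by
  rw [← Ring.multichoose_eq]
  have h := Ring.factorial_nsmul_multichoose_eq_ascPochhammer (1/2 : ℝ) n
  rw [Polynomial.ascPochhammer_smeval_cast, Polynomial.ascPochhammer_smeval_eq_eval] at h
  have hp : 0 < (ascPochhammer ℝ n).eval (1/2 : ℝ) := ascPochhammer_pos n _ (by norm_num)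
  rw [← h, nsmul_eq_mul] at hp
  have hf : (0 : ℝ) < n.factorial := by exact_mod_cast n.factorial_pos
  exact (pos_of_mul_pos_right hp hf.le).le

lemma series (u : ℝ) (hu : |u| < 1) :
    HasSum (fun n : ℕ => Ring.choose ((1/2 : ℝ) + n - 1) n * u ^ n) (1 / √(1 - u)) := by
  have h := (Real.one_div_one_sub_rpow_hasFPowerSeriesOnBall_zero (1/2)).hasSum (y := u)
    (by simpa [Metric.mem_eball, edist_dist, Real.dist_eq] using hu)
  rw [Real.sqrt_eq_rpow]
  simpa [FormalMultilinearSeries.ofScalars, mul_comm] using h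

section
variable {ι κ : Type} [Fintype ι] [Fintype κ] (t : ι → ι → ℝ) (v : ι → κ → ℝ)

lemma pow_pd (ht : ∀ i j, t i j = (∑ k, v i k * v j k) / 2) (n : ℕ) :
    ∀ c : ι → ℝ, 0 ≤ ∑ i, ∑ j, t i j ^ n * c i * c j := by
  induction n with
  | zero =>
    intro c
    simp only [pow_zero, one_mul, ← Finset.mul_sum, ← Finset.sum_mul]
    exact mul_self_nonneg _
  | succ n ih =>
    intro c
    have : ∑ i, ∑ j, t i j ^ (n+1) * c i * c j
        = (∑ k, ∑ i, ∑ j, t i j ^ n * (c i * v i k) * (c j * v j k)) / 2 := by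
      symm
      rw [Finset.sum_comm, Finset.sum_div]
      refine Finset.sum_congr rfl fun i _ => ?_
      rw [Finset.sum_comm, Finset.sum_div]
      refine Finset.sum_congr rfl fun j _ => ?_
      symm
      rw [pow_succ]
      nth_rw 2 [ht]
      rw [Finset.sum_div, Finset.mul_sum, Finset.sum_mul, Finset.sum_mul, Finset.sum_div]
      refine Finset.sum_congr rfl fun k _ => ?_
      ring
    rw [this]
    have := Finset.sum_nonneg (fun k (_ : k ∈ Finset.univ) => ih (fun i => c i * v i k))
    linarith

lemma deriv_pd (ht : ∀ i j, t i j = (∑ k, v i k * v j k) / 2)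
    (hb : ∀ i j, |t i j| ≤ 1) (r : ℝ) (hr0 : 0 < r) (hr1 : r < 1) (c : ι → ℝ) :
    0 ≤ ∑ i, ∑ j, (1 / √(1 - (r * t i j) ^ 2) * t i j) * c i * c j := by
  have key : HasSum (fun n : ℕ => ∑ i, ∑ j,
      (Ring.choose ((1/2 : ℝ) + n - 1) n * ((r * t i j) ^ 2) ^ n * t i j) * c i * c j)
      (∑ i, ∑ j, (1 / √(1 - (r * t i j) ^ 2) * t i j) * c i * c j) := by
    refine hasSum_sum fun i _ => hasSum_sum fun j _ => ?_
    refine (((series _ ?_).mul_right _).mul_right _).mul_right _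
    have h1 : |r * t i j| < 1 := by
      rw [abs_mul, abs_of_pos hr0]
      nlinarith [hb i j, abs_nonneg (t i j)]
    rw [abs_pow]
    exact pow_lt_one₀ (abs_nonneg _) h1 (by norm_num)
  refine key.nonneg fun n => ?_
  have e : ∑ i, ∑ j, (Ring.choose ((1/2 : ℝ) + n - 1) n * ((r * t i j) ^ 2) ^ n * t i j) * c i * c j
      = (Ring.choose ((1/2 : ℝ) + n - 1) n * r ^ (2 * n)) *
        ∑ i, ∑ j, t i j ^ (2 * n + 1) * c i * c j := by
    rw [Finset.mul_sum]
    refine Finset.sum_congr rfl fun i _ => ?_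
    rw [Finset.mul_sum]
    refine Finset.sum_congr rfl fun j _ => ?_
    rw [← pow_mul, mul_pow, pow_succ]
    ring
  rw [e]
  exact mul_nonneg (mul_nonneg (coeff_nonneg n) (by positivity)) (pow_pd t v ht _ c)

lemma arcsin_pd (ht : ∀ i j, t i j = (∑ k, v i k * v j k) / 2)
    (hb : ∀ i j, |t i j| ≤ 1) (c : ι → ℝ) :
    0 ≤ ∑ i, ∑ j, Real.arcsin (t i j) * c i * c j := by
  have hd : ∀ r ∈ interior (Set.Icc (0:ℝ) 1), HasDerivAt
      (fun r : ℝ => ∑ i : ι, ∑ j : ι, Real.arcsin (r * t i j) * c i * c j)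
      (∑ i, ∑ j, (1 / √(1 - (r * t i j) ^ 2) * t i j) * c i * c j) r := by
    intro r hr
    rw [interior_Icc] at hr
    refine HasDerivAt.fun_sum fun i _ => HasDerivAt.fun_sum fun j _ => ?_
    refine HasDerivAt.mul_const (HasDerivAt.mul_const ?_ _) _
    have h1 : |r * t i j| < 1 := by
      rw [abs_mul, abs_of_pos hr.1]
      nlinarith [hb i j, abs_nonneg (t i j), hr.1, hr.2]
    have h2 := abs_lt.1 h1
    have := (Real.hasDerivAt_arcsin h2.1.ne' h2.2.ne).comp r
      ((hasDerivAt_id r).mul_const (t i j))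
    simpa [Function.comp_def] using this
  have hm : MonotoneOn (fun r : ℝ => ∑ i, ∑ j, Real.arcsin (r * t i j) * c i * c j)
      (Set.Icc 0 1) := by
    refine monotoneOn_of_deriv_nonneg (convex_Icc 0 1) ?_ ?_ ?_
    · refine Continuous.continuousOn ?_
      have := Real.continuous_arcsin
      fun_prop
    · exact fun r hr => (hd r hr).differentiableAt.differentiableWithinAt
    · intro r hr
      rw [(hd r hr).deriv]
      rw [interior_Icc] at hr
      exact deriv_pd t v ht hb r hr.1 hr.2 c
  have := hm (Set.left_mem_Icc.2 zero_le_one) (Set.right_mem_Icc.2 zero_le_one) zero_le_one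
  simpa using this

end

abbrev G := Matrix.specialUnitaryGroup (Fin 2) ℂ

noncomputable def vec (g : G) : Fin 8 → ℝ :=
  ![(g.1 0 0).re, (g.1 0 0).im, (g.1 0 1).re, (g.1 0 1).im,
    (g.1 1 0).re, (g.1 1 0).im, (g.1 1 1).re, (g.1 1 1).im]

noncomputable def ip (g h : G) : ℝ := (Matrix.trace ((g * h⁻¹ : G) :
    Matrix (Fin 2) (Fin 2) ℂ)).re / 2

lemma ip_eq (g h : G) : ip g h = (∑ k, vec g k * vec h k) / 2 := by
  have : ((g * h⁻¹ : G) : Matrix (Fin 2) (Fin 2) ℂ) = g.1 * star h.1 := rfl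
  unfold ip
  rw [this]
  simp [Matrix.trace, Matrix.mul_apply, Fin.sum_univ_succ, vec, Matrix.star_apply]
  ring

lemma ip_self (g : G) : ip g g = 1 := by
  simp [ip, Matrix.trace_one]

lemma ip_abs (g h : G) : |ip g h| ≤ 1 := by
  have h1 := ip_self g
  have h2 := ip_self h
  rw [ip_eq] at h1 h2 ⊢
  have e1 : 0 ≤ ∑ k, (vec g k - vec h k) ^ 2 := Finset.sum_nonneg fun _ _ => sq_nonneg _
  have e2 : 0 ≤ ∑ k, (vec g k + vec h k) ^ 2 := Finset.sum_nonneg fun _ _ => sq_nonneg _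
  simp only [Fin.sum_univ_succ, Finset.univ_eq_empty, Finset.sum_empty] at *
  rw [abs_le]
  constructor <;> nlinarith

lemma d_self (g : G) : dSU2 g g = 0 := by
  have := ip_self g
  unfold ip at this
  rw [dSU2, this, Real.arccos_one]

lemma d_symm (g h : G) : dSU2 g h = dSU2 h g := by
  change Real.arccos (ip g h) = Real.arccos (ip h g)
  simp only [ip_eq, mul_comm]

lemma neg_real {ι : Type} [Fintype ι] (g : ι → G) (c : ι → ℝ) (hc : ∑ i, c i = 0) :
    ∑ i, ∑ j, dSU2 (g i) (g j) * c i * c j ≤ 0 := by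
  have h := arcsin_pd (fun i j => ip (g i) (g j)) (fun i => vec (g i))
    (fun i j => ip_eq _ _) (fun i j => ip_abs _ _) c
  have e : ∑ i, ∑ j, dSU2 (g i) (g j) * c i * c j
      = Real.pi / 2 * ((∑ i, c i) * (∑ j, c j))
        - ∑ i, ∑ j, Real.arcsin (ip (g i) (g j)) * c i * c j := by
    rw [Finset.sum_mul_sum, Finset.mul_sum, ← Finset.sum_sub_distrib]
    refine Finset.sum_congr rfl fun i _ => ?_
    rw [Finset.mul_sum, ← Finset.sum_sub_distrib]
    refine Finset.sum_congr rfl fun j _ => ?_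
    change Real.arccos (ip (g i) (g j)) * c i * c j = _
    rw [Real.arccos]
    ring
  rw [e, hc]
  linarith

lemma pos_real {n : ℕ} (g : Fin n → G) (c : Fin n → ℝ) :
    0 ≤ ∑ i, ∑ j, (dSU2 (g i) 1 + dSU2 (g j) 1 - dSU2 (g i) (g j)) / 2 * c i * c j := by
  have h := neg_real (ι := Option (Fin n)) (fun o => o.elim 1 g)
    (fun o => o.elim (-∑ i, c i) c) (by simp [Fintype.sum_option])
  simp only [Fintype.sum_option, Option.elim, d_self] at h
  have e : ∑ i, ∑ j, (dSU2 (g i) 1 + dSU2 (g j) 1 - dSU2 (g i) (g j)) / 2 * c i * c j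
      = (2 * ((∑ i, dSU2 (g i) 1 * c i) * ∑ j, c j)
        - ∑ i, ∑ j, dSU2 (g i) (g j) * c i * c j) / 2 := by
    have e2 : 2 * ((∑ i, dSU2 (g i) 1 * c i) * ∑ j, c j) =
      (∑ i, dSU2 (g i) 1 * c i) * (∑ j, c j) + (∑ j, c j) * (∑ i, dSU2 (g i) 1 * c i) := by ring
    rw [e2, Finset.sum_mul_sum, Finset.sum_mul_sum, ← Finset.sum_add_distrib,
      ← Finset.sum_sub_distrib, Finset.sum_div]
    refine Finset.sum_congr rfl fun i _ => ?_
    rw [← Finset.sum_add_distrib, ← Finset.sum_sub_distrib, Finset.sum_div]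
    refine Finset.sum_congr rfl fun j _ => ?_
    ring
  rw [e]
  have a1 : ∑ j, dSU2 1 (g j) * (-∑ i, c i) * c j
      = -((∑ i, dSU2 (g i) 1 * c i) * ∑ j, c j) := by
    rw [← mul_neg, Finset.sum_mul]
    refine Finset.sum_congr rfl fun j _ => ?_
    rw [d_symm]; ring
  have a2 : ∑ j, dSU2 (g j) 1 * c j * (-∑ i, c i)
      = -((∑ i, dSU2 (g i) 1 * c i) * ∑ j, c j) := by
    rw [← Finset.sum_mul]; ring
  rw [Finset.sum_add_distrib, a1, a2] at h
  linarith

lemma re_sum {n : ℕ} (a : Fin n → Fin n → ℝ) (ξ : Fin n → ℂ) :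
    (∑ i, ∑ j, ((a i j : ℝ) : ℂ) * ξ i * (starRingEnd ℂ) (ξ j)).re
      = ∑ i, ∑ j, a i j * (ξ i).re * (ξ j).re + ∑ i, ∑ j, a i j * (ξ i).im * (ξ j).im := by
  rw [Complex.re_sum, ← Finset.sum_add_distrib]
  refine Finset.sum_congr rfl fun i _ => ?_
  rw [Complex.re_sum, ← Finset.sum_add_distrib]
  refine Finset.sum_congr rfl fun j _ => ?_
  simp

end SU2Aux

open Finset in
/-- The bi-invariant distance on `SU(2)` is a restricted negative definite kernel;
equivalently, the Brownian kernel `K(g,h) = (d(g,e) + d(h,e) - d(g,h))/2` is positive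
definite on `SU(2)`. -/
theorem SU2_dist_restricted_negdef_and_brownian_kernel_posdef :
    (∀ (n : ℕ) (g : Fin n → Matrix.specialUnitaryGroup (Fin 2) ℂ) (ξ : Fin n → ℂ),
      (∑ i, ξ i) = 0 →
        (∑ i, ∑ j,
          ((dSU2 (g i) (g j) : ℝ) : ℂ) * ξ i * (starRingEnd ℂ) (ξ j)).re ≤ 0) ∧
    (∀ (n : ℕ) (g : Fin n → Matrix.specialUnitaryGroup (Fin 2) ℂ) (ξ : Fin n → ℂ),
      0 ≤ (∑ i, ∑ j,
        (((dSU2 (g i) 1 + dSU2 (g j) 1 - dSU2 (g i) (g j)) / 2 : ℝ) : ℂ)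
          * ξ i * (starRingEnd ℂ) (ξ j)).re) := by
  refine ⟨fun n g ξ h => ?_, fun n g ξ => ?_⟩
  · rw [SU2Aux.re_sum (fun i j => dSU2 (g i) (g j))]
    have h1 := SU2Aux.neg_real g (fun i => (ξ i).re) (by simpa using congrArg Complex.re h)
    have h2 := SU2Aux.neg_real g (fun i => (ξ i).im) (by simpa using congrArg Complex.im h)
    linarith
  · rw [SU2Aux.re_sum (fun i j => (dSU2 (g i) 1 + dSU2 (g j) 1 - dSU2 (g i) (g j)) / 2)]
    exact add_nonneg (SU2Aux.pos_real g _) (SU2Aux.pos_real g _)
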